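/- Let $n \geq 1$ and $m \geq n$ be integers, let $f : \mathbb{R} \to \mathbb{R}$ be any function, and suppose $u, v \in C^{\infty}([0,1))$ both satisfy the differential equation $w^{(n)}(t) = f(w(t))$ for all $t \in [0,1)$ together with the initial conditions $w(0) = w'(0) = \cdots = w^{(m-1)}(0) = 0$ and $w^{(m)}(0) = a$ for the same real number $a \neq 0$. Then there exists $\delta > 0$ such that $u(t) = v(t)$ for all $t \in [0,\delta]$. -/

import Mathlib

open Set Filter Topology

/-- A tower of successive derivatives on `[0,1)`. -/
def OdeTower (W : ℕ → ℝ → ℝ) : Prop :=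
  ∀ k, ∀ t ∈ Ico (0 : ℝ) 1, HasDerivWithinAt (W k) (W (k + 1) t) (Ico (0 : ℝ) 1) t

theorem OdeTower.cont {W : ℕ → ℝ → ℝ} (h : OdeTower W) (k : ℕ) :
    ContinuousOn (W k) (Ico (0 : ℝ) 1) := fun t ht => (h k t ht).continuousWithinAt

theorem OdeTower.shift {W : ℕ → ℝ → ℝ} (h : OdeTower W) (j : ℕ) :
    OdeTower (fun k => W (k + j)) := by
  intro k t ht
  have := h (k + j) t ht
  rwa [show k + j + 1 = k + 1 + j by ring] at this

theorem OdeTower.hasDerivAt {W : ℕ → ℝ → ℝ} (h : OdeTower W) (k : ℕ) {t : ℝ}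
    (ht : t ∈ Ioo (0 : ℝ) 1) : HasDerivAt (W k) (W (k + 1) t) t :=
  (h k t ⟨ht.1.le, ht.2⟩).hasDerivAt (Ico_mem_nhds ht.1 ht.2)

theorem one_step {W : ℕ → ℝ → ℝ} (h : OdeTower W) {δ b c : ℝ} (hδ1 : δ < 1) (p : ℕ)
    (h0 : W 0 0 = 0)
    (hb : ∀ t ∈ Icc (0 : ℝ) δ, |W 1 t - b * t ^ p| ≤ c * t ^ p) :
    ∀ t ∈ Icc (0 : ℝ) δ,
      |W 0 t - b / (p + 1) * t ^ (p + 1)| ≤ c / (p + 1) * t ^ (p + 1) := by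
  have hp : ((p : ℝ) + 1) ≠ 0 := by positivity
  have hd : ∀ e x : ℝ, HasDerivAt (fun t : ℝ => e / (p + 1) * t ^ (p + 1)) (e * x ^ p) x := by
    intro e x
    have := (hasDerivAt_pow (p + 1) x).const_mul (e / ((p : ℝ) + 1))
    refine this.congr_deriv ?_
    rw [Nat.add_sub_cancel]
    push_cast
    field_simp
  have hsub : Icc (0 : ℝ) δ ⊆ Ico 0 1 := fun x hx => ⟨hx.1, hx.2.trans_lt hδ1⟩
  intro t ht
  have key := image_norm_le_of_norm_deriv_right_le_deriv_boundary
    (f := fun t => W 0 t - b / (p + 1) * t ^ (p + 1)) (f' := fun t => W 1 t - b * t ^ p)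
    (a := 0) (b := δ) (B := fun t : ℝ => c / (p + 1) * t ^ (p + 1)) (B' := fun t => c * t ^ p)
    (((h.cont 0).mono hsub).sub (by fun_prop))
    (by
      intro x hx
      have hx' : x ∈ Ico (0 : ℝ) 1 := hsub ⟨hx.1, hx.2.le⟩
      have h1 : HasDerivWithinAt (W 0) (W 1 x) (Ici x) x := by
        have := (h 0 x hx').mono (Ico_subset_Ico_left hx'.1)
        exact this.mono_of_mem_nhdsWithin (Ico_mem_nhdsGE hx'.2)
      exact h1.sub (hd b x).hasDerivWithinAt)
    (by simp [h0])
    (fun x => hd c x)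
    (fun x hx => by simpa using hb x ⟨hx.1, hx.2.le⟩)
  simpa using key ht

theorem many_step (j : ℕ) : ∀ {W : ℕ → ℝ → ℝ} (_ : OdeTower W) {δ c : ℝ} (_ : δ < 1) (p : ℕ)
    (_ : ∀ k < j, W k 0 = 0)
    (_ : ∀ t ∈ Icc (0 : ℝ) δ, |W j t| ≤ c * t ^ p),
    ∀ t ∈ Icc (0 : ℝ) δ,
      |W 0 t| ≤ c * (p.factorial / (p + j).factorial) * t ^ (p + j) := by
  induction j with
  | zero =>
    intro W h δ c hδ p _ hb t ht
    have : (p.factorial : ℝ) ≠ 0 := by positivity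
    simpa [div_self this] using hb t ht
  | succ j ih =>
    intro W h δ c hδ p h0 hb
    have h1 := ih (h.shift 1) hδ p (fun k hk => h0 (k + 1) (by omega)) hb
    have h2 := one_step h (b := 0) hδ (p + j) (h0 0 (by omega)) (by simpa using h1)
    intro t ht
    have h3 := h2 t ht
    rw [zero_div, zero_mul, sub_zero] at h3
    refine h3.trans (le_of_eq ?_)
    rw [← add_assoc, Nat.factorial_succ]
    push_cast
    have : ((p + j).factorial : ℝ) ≠ 0 := by positivity
    have : (p : ℝ) + j + 1 ≠ 0 := by positivity
    field_simp

theorem tower_asymp (m : ℕ) : ∀ {W : ℕ → ℝ → ℝ} (_ : OdeTower W)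
    (_ : ∀ k < m, W k 0 = 0) {ε : ℝ} (_ : 0 < ε),
    ∃ δ > 0, δ < 1 ∧ ∀ t ∈ Icc (0 : ℝ) δ,
      |W 0 t - W m 0 / m.factorial * t ^ m| ≤ ε * t ^ m := by
  induction m with
  | zero =>
    intro W h _ ε hε
    have hc := (h.cont 0) 0 (by simp)
    have := (Metric.continuousWithinAt_iff.1 hc) ε hε
    obtain ⟨δ, hδ, H⟩ := this
    refine ⟨min (δ / 2) (1 / 2), by positivity, ?_, ?_⟩
    · exact (min_le_right _ _).trans_lt (by norm_num)
    · intro t ht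
      have h1 := ht.2.trans (min_le_left _ _)
      have h2 := ht.2.trans (min_le_right _ _)
      have := H (x := t) ⟨ht.1, by linarith⟩
        (by rw [Real.dist_eq, sub_zero, abs_of_nonneg ht.1]; linarith)
      rw [Real.dist_eq] at this
      simpa using this.le
  | succ m ih =>
    intro W h h0 ε hε
    obtain ⟨δ, hδ, hδ1, H⟩ := ih (h.shift 1) (fun k hk => h0 (k + 1) (by omega)) hε
    refine ⟨δ, hδ, hδ1, ?_⟩
    have h2 := one_step h hδ1 m (h0 0 (by omega)) H
    intro t ht
    have h3 := h2 t ht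
    have e1 : W (m + 1) 0 / (m.factorial : ℝ) / (m + 1) = W (m + 1) 0 / (m + 1).factorial := by
      rw [Nat.factorial_succ]; push_cast
      have : (m.factorial : ℝ) ≠ 0 := by positivity
      field_simp
    rw [e1] at h3
    refine h3.trans ?_
    have : 0 ≤ t ^ (m + 1) := pow_nonneg ht.1 _
    refine mul_le_mul_of_nonneg_right (div_le_self hε.le ?_) this
    have : (0 : ℝ) ≤ m := by positivity
    linarith

theorem tower_mvt {W : ℕ → ℝ → ℝ} (h : OdeTower W) (n : ℕ) {l r s t : ℝ} (hl : 0 < l)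
    (hr : r < 1) (hs : s ∈ Icc l r) (ht : t ∈ Icc l r) :
    ∃ ξ ∈ Icc l r, (W n t - W n s) * W 1 ξ = (W 0 t - W 0 s) * W (n + 1) ξ := by
  have aux : ∀ s ∈ Icc l r, ∀ t ∈ Icc l r, s < t →
      ∃ ξ ∈ Icc l r, (W n t - W n s) * W 1 ξ = (W 0 t - W 0 s) * W (n + 1) ξ := by
    intro s hs t ht hst
    have hsub : Icc s t ⊆ Ico (0 : ℝ) 1 := fun x hx =>
      ⟨hl.le.trans (hs.1.trans hx.1), (hx.2.trans ht.2).trans_lt hr⟩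
    have hsub' : ∀ x ∈ Ioo s t, x ∈ Ioo (0 : ℝ) 1 := fun x hx =>
      ⟨hl.trans_le (hs.1.trans hx.1.le), (hx.2.le.trans ht.2).trans_lt hr⟩
    obtain ⟨c, hc, hE⟩ := exists_ratio_hasDerivAt_eq_ratio_slope (W 0) (W 1) hst
      ((h.cont 0).mono hsub) (fun x hx => h.hasDerivAt 0 (hsub' x hx))
      (W n) (W (n + 1)) ((h.cont n).mono hsub) (fun x hx => h.hasDerivAt n (hsub' x hx))
    exact ⟨c, ⟨hs.1.trans hc.1.le, hc.2.le.trans ht.2⟩, hE⟩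
  rcases lt_trichotomy s t with hlt | heq | hgt
  · exact aux s hs t ht hlt
  · subst heq; exact ⟨s, hs, by simp⟩
  · obtain ⟨ξ, hξ, hE⟩ := aux t ht s hs hgt
    exact ⟨ξ, hξ, by linarith⟩

theorem choose_eps (n m : ℕ) (hn : 1 ≤ n) (hm : n ≤ m) :
    ∃ ε : ℝ, 0 < ε ∧ ε < 1 ∧ ε < 1 / ((m - 1).factorial : ℝ) ∧
      (((m - n : ℕ) : ℝ) / ((m - n).factorial : ℝ) + ε) /
        ((1 / ((m - 1).factorial : ℝ) - ε) * (1 - ε) ^ n)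
        < (m.factorial : ℝ) / (m - n).factorial := by
  have hB : (0 : ℝ) < 1 / ((m - 1).factorial : ℝ) := by positivity
  have hc : ContinuousAt (fun ε : ℝ => (((m - n : ℕ) : ℝ) / ((m - n).factorial : ℝ) + ε) /
        ((1 / ((m - 1).factorial : ℝ) - ε) * (1 - ε) ^ n)) 0 := by
    apply ContinuousAt.div
    · fun_prop
    · fun_prop
    · simp; positivity
  have h0 : (((m - n : ℕ) : ℝ) / ((m - n).factorial : ℝ) + 0) /
        ((1 / ((m - 1).factorial : ℝ) - 0) * (1 - 0) ^ n)
        < (m.factorial : ℝ) / (m - n).factorial := by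
    have e : (m.factorial : ℝ) = m * (m - 1).factorial := by
      exact_mod_cast (Nat.mul_factorial_pred (by omega)).symm
    rw [e]
    have hlt : ((m - n : ℕ) : ℝ) < m := by exact_mod_cast (by omega)
    have p1 : (0 : ℝ) < (m - 1).factorial := by positivity
    have p2 : (0 : ℝ) < (m - n).factorial := by positivity
    simp only [add_zero, sub_zero, one_pow, mul_one]
    rw [div_div_eq_mul_div, div_one, div_mul_eq_mul_div]
    gcongr
  have e1 := hc.eventually_lt_const h0
  have e2 := (eventually_lt_nhds (zero_lt_one (α := ℝ)))
  have e3 := (eventually_lt_nhds hB)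
  have ev : ∀ᶠ ε in 𝓝[>] (0 : ℝ), _ := nhdsWithin_le_nhds (e1.and (e2.and e3))
  obtain ⟨ε, ⟨h1, h2, h3⟩, h4⟩ := (ev.and self_mem_nhdsWithin).exists
  exact ⟨ε, h4, h2, h3, h1⟩

theorem choose_eta (m : ℕ) (hm : 1 ≤ m) (b ε : ℝ) (hb : 0 < b) (hε : 0 < ε) (hε1 : ε < 1) :
    ∃ η : ℝ, 0 < η ∧ (b + η) * (1 - ε) ^ m < b - η ∧ b + η < (b - η) * (1 + ε) ^ m := by
  have p1 : (1 - ε) ^ m < 1 := pow_lt_one₀ (by linarith) (by linarith) (by omega)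
  have p2 : 1 < (1 + ε) ^ m := one_lt_pow₀ (by linarith) (by omega)
  have c1 : ContinuousAt (fun η : ℝ => (b + η) * (1 - ε) ^ m - (b - η)) 0 := by fun_prop
  have c2 : ContinuousAt (fun η : ℝ => b + η - (b - η) * (1 + ε) ^ m) 0 := by fun_prop
  have e1 := c1.eventually_lt_const (u := 0) (by simp; nlinarith)
  have e2 := c2.eventually_lt_const (u := 0) (by simp; nlinarith)
  have ev : ∀ᶠ η in 𝓝[>] (0 : ℝ), _ := nhdsWithin_le_nhds (e1.and e2)
  obtain ⟨η, ⟨h1, h2⟩, h4⟩ := (ev.and self_mem_nhdsWithin).exists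
  exact ⟨η, h4, by linarith, by linarith⟩

theorem high_bound {U : ℕ → ℝ → ℝ} (hU : OdeTower U) (n m : ℕ) (hm : n ≤ m)
    (h0 : ∀ k < m, U k 0 = 0) (h1 : U m 0 = 1) {ε : ℝ} (hε : 0 < ε) :
    ∃ δ > 0, δ < 1 ∧ ∀ t ∈ Icc (0 : ℝ) δ,
      |U (n + 1) t| * t ≤ (((m - n : ℕ) : ℝ) / ((m - n).factorial : ℝ) + ε) * t ^ (m - n) := by
  rcases hm.eq_or_lt with rfl | hlt
  · obtain ⟨δ, hδ, hδ1, H⟩ := tower_asymp 0 (hU.shift (n + 1)) (by simp) (zero_lt_one)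
    set M := |U (n + 1) 0| + 1 with hM
    have hMp : 0 < M := by positivity
    refine ⟨min δ (ε / M), by positivity, (min_le_left _ _).trans_lt hδ1, ?_⟩
    intro t ht
    have h2 := H t ⟨ht.1, ht.2.trans (min_le_left _ _)⟩
    have h3 := ht.2.trans (min_le_right _ _)
    simp at h2
    have h4 : |U (n + 1) t| ≤ M := by
      have := abs_sub_abs_le_abs_sub (U (n + 1) t) (U (n + 1) 0)
      linarith
    have h5 : t * M ≤ ε := (le_div_iff₀ hMp).1 h3
    have h6 := mul_le_mul_of_nonneg_right h4 ht.1
    simp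
    linarith
  · obtain ⟨q, hq⟩ : ∃ q, m = n + 1 + q := ⟨m - (n + 1), by omega⟩
    obtain ⟨δ, hδ, hδ1, H⟩ := tower_asymp q (hU.shift (n + 1))
      (fun k hk => h0 _ (by omega)) hε
    refine ⟨δ, hδ, hδ1, ?_⟩
    intro t ht
    have h2 := H t ht
    have e1 : q + (n + 1) = m := by omega
    have e2 : m - n = q + 1 := by omega
    simp only [e1, h1, zero_add] at h2
    have e3 : ((q + 1 : ℕ) : ℝ) / ((q + 1).factorial : ℝ) = 1 / q.factorial := by
      rw [Nat.factorial_succ]; push_cast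
      have : (q.factorial : ℝ) ≠ 0 := by positivity
      field_simp
    rw [e2, e3]
    have hp : 0 ≤ t ^ q := pow_nonneg ht.1 _
    have h3 : |U (n + 1) t| ≤ (1 / q.factorial + ε) * t ^ q := by
      have := abs_sub_abs_le_abs_sub (U (n + 1) t) (1 / q.factorial * t ^ q)
      rw [abs_of_nonneg (a := 1 / (q.factorial : ℝ) * t ^ q) (by positivity)] at this
      linarith
    have := mul_le_mul_of_nonneg_right h3 ht.1
    rw [pow_succ]; linarith

theorem core (n m : ℕ) (hn : 1 ≤ n) (hm : n ≤ m) (f : ℝ → ℝ) {U V : ℕ → ℝ → ℝ}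
    (hU : OdeTower U) (hV : OdeTower V)
    (hUe : ∀ t ∈ Ico (0 : ℝ) 1, U n t = f (U 0 t))
    (hVe : ∀ t ∈ Ico (0 : ℝ) 1, V n t = f (V 0 t))
    (hU0 : ∀ k < m, U k 0 = 0) (hUm : U m 0 = 1)
    (hV0 : ∀ k < m, V k 0 = 0) (hVm : V m 0 = 1) :
    ∃ δ > (0 : ℝ), ∀ t ∈ Icc (0 : ℝ) δ, U 0 t = V 0 t := by
  obtain ⟨ε, hε, hε1, hεB, hC⟩ := choose_eps n m hn hm
  set A : ℝ := ((m - n : ℕ) : ℝ) / ((m - n).factorial : ℝ) with hA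
  set B : ℝ := 1 / ((m - 1).factorial : ℝ) with hB
  set C : ℝ := (A + ε) / ((B - ε) * (1 - ε) ^ n) with hCdef
  have hA0 : 0 ≤ A := by positivity
  have hden : 0 < (B - ε) * (1 - ε) ^ n :=
    mul_pos (by linarith) (pow_pos (by linarith) _)
  have hC0 : 0 ≤ C := by positivity
  have hb : (0 : ℝ) < 1 / (m.factorial : ℝ) := by positivity
  obtain ⟨η, hη, hη1, hη2⟩ := choose_eta m (by omega) _ ε hb hε hε1
  set b : ℝ := 1 / (m.factorial : ℝ) with hbdef
  obtain ⟨δ1, hδ1, hδ1', H1⟩ := tower_asymp m hU hU0 hη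
  obtain ⟨δ2, hδ2, hδ2', H2⟩ := tower_asymp m hV hV0 hη
  obtain ⟨δ3, hδ3, hδ3', H3⟩ := tower_asymp (m - 1) (hU.shift 1)
    (fun k hk => hU0 _ (by omega)) hε
  obtain ⟨δ4, hδ4, hδ4', H4⟩ := high_bound hU n m hm hU0 hUm hε
  rw [hUm] at H1
  rw [hVm] at H2
  simp only [show m - 1 + 1 = m by omega, hUm, zero_add] at H3
  set r := min (min δ1 δ2) (min δ3 δ4) with hr
  have hr0 : 0 < r := by positivity
  have hr1 : r ≤ δ1 := (min_le_left _ _).trans (min_le_left _ _)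
  have hr2 : r ≤ δ2 := (min_le_left _ _).trans (min_le_right _ _)
  have hr3 : r ≤ δ3 := (min_le_right _ _).trans (min_le_left _ _)
  have hr4 : r ≤ δ4 := (min_le_right _ _).trans (min_le_right _ _)
  have hrlt : r < 1 := by linarith
  -- the Lipschitz-type bound
  have lip : ∀ t, 0 < t → t ≤ r / 2 → |U n t - V n t| * t ^ n ≤ C * |U 0 t - V 0 t| := by
    intro t ht0 htr
    have hl0 : 0 < (1 - ε) * t := mul_pos (by linarith) ht0
    have hlt : (1 - ε) * t ≤ t := by nlinarith
    have hrt : t ≤ (1 + ε) * t := by nlinarith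
    have hrr : (1 + ε) * t ≤ r := by nlinarith
    have a1 := abs_le.1 (H1 ((1 - ε) * t) ⟨hl0.le, by linarith⟩)
    have a2 := abs_le.1 (H1 ((1 + ε) * t) ⟨by linarith, by linarith⟩)
    have a3 := abs_le.1 (H2 t ⟨ht0.le, by linarith⟩)
    rw [mul_pow] at a1 a2
    have htm : 0 < t ^ m := pow_pos ht0 _
    have b1 := mul_lt_mul_of_pos_right hη1 htm
    have b2 := mul_lt_mul_of_pos_right hη2 htm
    have hivt := intermediate_value_Icc (hlt.trans hrt)
      ((hU.cont 0).mono (fun x (hx : x ∈ Icc ((1 - ε) * t) ((1 + ε) * t)) =>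
        ⟨hl0.le.trans hx.1, (hx.2.trans hrr).trans_lt hrlt⟩))
    obtain ⟨s, hs, hsE⟩ := hivt (show V 0 t ∈ _ from ⟨by linarith, by linarith⟩)
    have hVn : V n t = U n s := by
      rw [hVe t ⟨ht0.le, by linarith⟩, hUe s ⟨hl0.le.trans hs.1, by linarith [hs.2]⟩, hsE]
    obtain ⟨ξ, hξ, hE⟩ := tower_mvt hU n hl0 (by linarith) hs ⟨hlt, hrt⟩
    rw [← hVn, hsE] at hE
    have hξ0 : 0 < ξ := hl0.trans_le hξ.1
    have hξr : ξ ≤ r := hξ.2.trans hrr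
    have c3 := (abs_le.1 (H3 ξ ⟨hξ0.le, by linarith⟩)).1
    have c4 := H4 ξ ⟨hξ0.le, by linarith⟩
    have hξp : 0 < ξ ^ (m - 1) := pow_pos hξ0 _
    have d3 : (B - ε) * ξ ^ (m - 1) ≤ U 1 ξ := by linarith
    have hU1 : 0 < U 1 ξ := lt_of_lt_of_le (mul_pos (by linarith) hξp) d3
    have d4 : |U (n + 1) ξ| * ξ ^ n ≤ (A + ε) * ξ ^ (m - 1) := by
      have := mul_le_mul_of_nonneg_right c4 (pow_nonneg hξ0.le (n - 1))
      have e1 : ξ * ξ ^ (n - 1) = ξ ^ n := by rw [← pow_succ']; congr 1; omega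
      have e2 : ξ ^ (m - n) * ξ ^ (n - 1) = ξ ^ (m - 1) := by rw [← pow_add]; congr 1; omega
      rwa [mul_assoc, e1, mul_assoc, e2] at this
    have d5 : (1 - ε) ^ n * t ^ n ≤ ξ ^ n := by
      rw [← mul_pow]; exact pow_le_pow_left₀ hl0.le hξ.1 n
    have d6 : |U (n + 1) ξ| * t ^ n * ((B - ε) * (1 - ε) ^ n) ≤ (A + ε) * U 1 ξ := by
      calc |U (n + 1) ξ| * t ^ n * ((B - ε) * (1 - ε) ^ n)
          = (B - ε) * (|U (n + 1) ξ| * ((1 - ε) ^ n * t ^ n)) := by ring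
        _ ≤ (B - ε) * (|U (n + 1) ξ| * ξ ^ n) := by
            apply mul_le_mul_of_nonneg_left _ (by linarith)
            exact mul_le_mul_of_nonneg_left d5 (abs_nonneg _)
        _ ≤ (B - ε) * ((A + ε) * ξ ^ (m - 1)) := mul_le_mul_of_nonneg_left d4 (by linarith)
        _ = (A + ε) * ((B - ε) * ξ ^ (m - 1)) := by ring
        _ ≤ (A + ε) * U 1 ξ := mul_le_mul_of_nonneg_left d3 (by linarith)
    have d7 : |U (n + 1) ξ| * t ^ n ≤ C * U 1 ξ := by
      rw [hCdef, div_mul_eq_mul_div, le_div_iff₀ hden]; exact d6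
    have hE' : |U n t - V n t| * U 1 ξ = |U 0 t - V 0 t| * |U (n + 1) ξ| := by
      rw [← abs_mul, ← hE, abs_mul, abs_of_pos hU1]
    refine le_of_mul_le_mul_right ?_ hU1
    calc |U n t - V n t| * t ^ n * U 1 ξ = (|U n t - V n t| * U 1 ξ) * t ^ n := by ring
      _ = |U 0 t - V 0 t| * (|U (n + 1) ξ| * t ^ n) := by rw [hE']; ring
      _ ≤ |U 0 t - V 0 t| * (C * U 1 ξ) := mul_le_mul_of_nonneg_left d7 (abs_nonneg _)
      _ = C * |U 0 t - V 0 t| * U 1 ξ := by ring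
  -- contraction
  have hD : OdeTower (fun k t => U k t - V k t) := fun k t ht => (hU k t ht).sub (hV k t ht)
  set θ : ℝ := C * ((m - n).factorial / m.factorial) with hθ
  have hθ0 : 0 ≤ θ := by positivity
  have hθ1 : θ < 1 := by
    have p1 : (0 : ℝ) < m.factorial := by positivity
    have p2 : (0 : ℝ) < (m - n).factorial := by positivity
    rw [lt_div_iff₀ p2] at hC
    rw [hθ, ← mul_div_assoc, div_lt_one p1]
    exact hC
  have iter : ∀ j : ℕ, ∀ t ∈ Icc (0 : ℝ) (r / 2),
      |U 0 t - V 0 t| ≤ (2 * η) * θ ^ j * t ^ m := by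
    intro j
    induction j with
    | zero =>
      intro t ht
      have a1 := abs_le.1 (H1 t ⟨ht.1, by linarith [ht.2]⟩)
      have a2 := abs_le.1 (H2 t ⟨ht.1, by linarith [ht.2]⟩)
      rw [pow_zero, mul_one, abs_le]
      constructor <;> linarith
    | succ j ih =>
      have := many_step n hD (δ := r / 2) (c := C * ((2 * η) * θ ^ j)) (by linarith) (m - n)
        (fun k hk => by simp [hU0 k (by omega), hV0 k (by omega)])
        (by
          intro t ht
          rcases ht.1.eq_or_lt with h | h
          · subst h
            have : U n 0 - V n 0 = 0 := by
              rcases hm.eq_or_lt with h | h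
              · rw [h, hUm, hVm, sub_self]
              · rw [hU0 n h, hV0 n h, sub_self]
            simp only [this, abs_zero]
            positivity
          · have l1 := lip t h ht.2
            have l2 := mul_le_mul_of_nonneg_left (ih t ht) hC0
            refine le_of_mul_le_mul_right ?_ (pow_pos h n)
            refine (l1.trans l2).trans (le_of_eq ?_)
            rw [mul_assoc (C * (2 * η * θ ^ j)), ← pow_add, Nat.sub_add_cancel hm]
            ring)
      intro t ht
      refine (this t ht).trans (le_of_eq ?_)
      rw [Nat.sub_add_cancel hm, pow_succ, hθ]
      ring
  refine ⟨r / 2, by positivity, ?_⟩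
  intro t ht
  have hlim : Tendsto (fun j : ℕ => (2 * η) * θ ^ j * t ^ m) atTop (𝓝 ((2 * η) * 0 * t ^ m)) :=
    ((tendsto_pow_atTop_nhds_zero_of_lt_one hθ0 hθ1).const_mul _).mul_const _
  have hle := ge_of_tendsto' hlim (fun j => iter j t ht)
  rw [mul_zero, zero_mul] at hle
  have := abs_nonpos_iff.1 hle
  linarith

theorem tower_of_contDiffOn {u : ℝ → ℝ} (hu : ContDiffOn ℝ (⊤ : ℕ∞) u (Ico (0 : ℝ) 1)) (a : ℝ) :
    OdeTower (fun k t => iteratedDerivWithin k u (Ico (0 : ℝ) 1) t / a) := by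
  intro k t ht
  have hs : UniqueDiffOn ℝ (Ico (0 : ℝ) 1) := uniqueDiffOn_Ico 0 1
  have hd := hu.differentiableOn_iteratedDerivWithin (m := k)
    (by exact_mod_cast WithTop.coe_lt_top k) hs
  have := (hd t ht).hasDerivWithinAt
  rw [← iteratedDerivWithin_succ] at this
  exact this.div_const a


/-- **Uniqueness for `u⁽ⁿ⁾ = f(u)` with high-order vanishing initial data.**
If two smooth solutions on `[0, 1)` of `w⁽ⁿ⁾(t) = f(w(t))` satisfy
`w(0) = ⋯ = w⁽ᵐ⁻¹⁾(0) = 0` and `w⁽ᵐ⁾(0) = a ≠ 0` with `m ≥ n`, then they agree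
near `0`.  No assumption is made on `f`. -/
theorem ode_uniqueness_high_order_vanishing
    (n m : ℕ) (hn : 1 ≤ n) (hm : n ≤ m) (f : ℝ → ℝ) (a : ℝ) (ha : a ≠ 0)
    (u v : ℝ → ℝ)
    (hu : ContDiffOn ℝ (⊤ : ℕ∞) u (Set.Ico (0 : ℝ) 1))
    (hv : ContDiffOn ℝ (⊤ : ℕ∞) v (Set.Ico (0 : ℝ) 1))
    (hueq : ∀ t ∈ Set.Ico (0 : ℝ) 1,
      iteratedDerivWithin n u (Set.Ico (0 : ℝ) 1) t = f (u t))
    (hveq : ∀ t ∈ Set.Ico (0 : ℝ) 1,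
      iteratedDerivWithin n v (Set.Ico (0 : ℝ) 1) t = f (v t))
    (hu0 : ∀ k < m, iteratedDerivWithin k u (Set.Ico (0 : ℝ) 1) 0 = 0)
    (hum : iteratedDerivWithin m u (Set.Ico (0 : ℝ) 1) 0 = a)
    (hv0 : ∀ k < m, iteratedDerivWithin k v (Set.Ico (0 : ℝ) 1) 0 = 0)
    (hvm : iteratedDerivWithin m v (Set.Ico (0 : ℝ) 1) 0 = a) :
    ∃ δ > (0 : ℝ), ∀ t ∈ Set.Icc (0 : ℝ) δ, u t = v t := by
  obtain ⟨δ, hδ, H⟩ := core n m hn hm (fun x => f (a * x) / a)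
    (tower_of_contDiffOn hu a) (tower_of_contDiffOn hv a)
    (by
      intro t ht
      simp only [iteratedDerivWithin_zero, hueq t ht]
      rw [mul_div_cancel₀ _ ha])
    (by
      intro t ht
      simp only [iteratedDerivWithin_zero, hveq t ht]
      rw [mul_div_cancel₀ _ ha])
    (fun k hk => by simp [hu0 k hk]) (by simp [hum, ha])
    (fun k hk => by simp [hv0 k hk]) (by simp [hvm, ha])
  refine ⟨δ, hδ, fun t ht => ?_⟩
  have := H t ht
  simp only [iteratedDerivWithin_zero] at this
  exact (div_left_inj' ha).1 this
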